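/- Let 0 < q ≤ p ≤ 2. There exists a constant A_q > 0, depending only on q, such that for every Banach space X and every injective map τ : D → D, ‖T_{τ,q} ⊗ Id_X‖_q ≤ A_q · C₁^{1/q − 1/p} · ‖T_{τ,p} ⊗ Id_X‖_p (inequality in [0,∞]). -/

import Mathlib

open MeasureTheory Set
open scoped ENNReal NNReal Classical

noncomputable section

/-- A dyadic subinterval of `[0,1)`: the half-open interval
`[k/2^n, (k+1)/2^n)` with `k < 2^n`. -/
structure DyadicI where
  n : ℕ
  k : ℕ
  hk : k < 2 ^ n

instance : Nonempty DyadicI := ⟨⟨0, 0, by norm_num⟩⟩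

namespace DyadicI

/-- The length `|I| = 2^{-n}` of a dyadic interval. -/
def len (I : DyadicI) : ℝ := (2 : ℝ) ^ (-(I.n : ℤ))

/-- The left endpoint `k 2^{-n}` of a dyadic interval. -/
def lep (I : DyadicI) : ℝ := (I.k : ℝ) * I.len

/-- The underlying point set `[k/2^n, (k+1)/2^n)` of a dyadic interval. -/
def toSet (I : DyadicI) : Set ℝ := Set.Ico I.lep (I.lep + I.len)

/-- The `L^∞`-normalized Haar function `h_I`: `1` on the left half of `I`,
`-1` on the right half of `I`, `0` off `I`. -/
def haar (I : DyadicI) (t : ℝ) : ℝ :=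
  if t ∈ Set.Ico I.lep (I.lep + I.len / 2) then 1
  else if t ∈ Set.Ico (I.lep + I.len / 2) (I.lep + I.len) then -1
  else 0

end DyadicI

open DyadicI

section Defs

variable {X : Type*} [NormedAddCommGroup X] [NormedSpace ℝ X]

/-- The square function `𝕊(f)` of the `X`-valued Haar expansion `f = ∑_{I ∈ s} x_I h_I`:
`𝕊(f)(t) = (E_ε ‖∑_I ε_I x_I h_I(t)‖²)^{1/2}`, the average being taken over all
choices of signs `ε_I ∈ {±1}`, `I ∈ s`. -/
def sqFn (s : Finset DyadicI) (x : DyadicI → X) (t : ℝ) : ℝ :=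
  Real.sqrt ((∑ ε : {I // I ∈ s} → Bool,
    ‖∑ I ∈ s.attach, ((if ε I then (1 : ℝ) else -1) * haar I.1 t) • x I.1‖ ^ 2) /
      2 ^ s.card)

/-- The `H^p_X` (quasi-)norm of `f = ∑_{I ∈ s} x_I h_I`:
`‖f‖ = (∫₀¹ 𝕊(f)(t)^p dt)^{1/p}`. -/
def HpNormV (p : ℝ) (s : Finset DyadicI) (x : DyadicI → X) : ℝ :=
  (∫ t in Set.Icc (0 : ℝ) 1, sqFn s x t ^ p) ^ (1 / p)

/-- The coefficients of `(T_{τ,p} ⊗ Id_X)(f)` for `f = ∑_{I ∈ s} x_I h_I`, namely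
`(T_{τ,p} ⊗ Id_X)(f) = ∑_{I ∈ s} (|I|/|τ(I)|)^{1/p} x_I h_{τ(I)}`, as a family of
coefficients indexed by the Haar support `τ(s)`. -/
def rearrCoef (τ : DyadicI → DyadicI) (p : ℝ) (s : Finset DyadicI) (x : DyadicI → X) :
    DyadicI → X :=
  fun J => ∑ I ∈ s, if τ I = J then ((len I / len (τ I)) ^ (1 / p)) • x I else 0

/-- The scalar dyadic square function `S(f) = (∑_I a_I² 1_I)^{1/2}`
of `f = ∑_{I ∈ s} a_I h_I`. -/
def sqFnS (s : Finset DyadicI) (a : DyadicI → ℝ) (t : ℝ) : ℝ :=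
  Real.sqrt (∑ I ∈ s, a I ^ 2 * Set.indicator (toSet I) (fun _ => (1 : ℝ)) t)

/-- The scalar dyadic `H^p` (quasi-)norm `‖f‖_{H^p} = ‖S(f)‖_{L^p[0,1]}`. -/
def HpNormS (p : ℝ) (s : Finset DyadicI) (a : DyadicI → ℝ) : ℝ :=
  (∫ t in Set.Icc (0 : ℝ) 1, sqFnS s a t ^ p) ^ (1 / p)

/-- The coefficients of the scalar rearrangement operator `T_{τ,p}` applied to
`f = ∑_{I ∈ s} a_I h_I`; `T_{τ,p}` is determined by
`T_{τ,p}(h_I/|I|^{1/p}) = h_{τ(I)}/|τ(I)|^{1/p}`. -/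
def rearrCoefS (τ : DyadicI → DyadicI) (p : ℝ) (s : Finset DyadicI) (a : DyadicI → ℝ) :
    DyadicI → ℝ :=
  fun J => ∑ I ∈ s, if τ I = J then ((len I / len (τ I)) ^ (1 / p)) * a I else 0

/-- The operator norm `‖T_{τ,p} ⊗ Id_X : H^p_X → H^p_X‖ ∈ [0,∞]`, computed as the
supremum over finitely supported `f` in the unit ball of `H^p_X`. -/
def hpOpNorm (τ : DyadicI → DyadicI) (p : ℝ) (X : Type*) [NormedAddCommGroup X]
    [NormedSpace ℝ X] : ℝ≥0∞ :=
  ⨆ (s : Finset DyadicI) (x : DyadicI → X) (_ : HpNormV p s x ≤ 1),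
    ENNReal.ofReal (HpNormV p (s.image τ) (rearrCoef τ p s x))

/-- The scalar operator norm `‖T_{τ,p} : H^p → H^p‖ ∈ [0,∞]`. -/
def hpOpNormS (τ : DyadicI → DyadicI) (p : ℝ) : ℝ≥0∞ :=
  ⨆ (s : Finset DyadicI) (a : DyadicI → ℝ) (_ : HpNormS p s a ≤ 1),
    ENNReal.ofReal (HpNormS p (s.image τ) (rearrCoefS τ p s a))

/-- For `H = τ(L)` (so that `σ(J) = I` for `J = τ(I)`, `I ∈ L`), the maximal function
`μ_H(t) = sup_{J ∈ H} (|σ(J)|/|J|) 1_J(t) = sup_{I ∈ L} (|I|/|τ(I)|) 1_{τ(I)}(t)`,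
as an `[0,∞]`-valued function. -/
def muSet (τ : DyadicI → DyadicI) (L : Set DyadicI) (t : ℝ) : ℝ≥0∞ :=
  ⨆ (I : DyadicI) (_ : I ∈ L),
    ENNReal.ofReal (len I / len (τ I) * Set.indicator (toSet (τ I)) (fun _ => (1 : ℝ)) t)

/-- For `H = τ(L)` with `L` finite, the (real-valued) maximal function
`μ_H(t) = max_{I ∈ L} (|I|/|τ(I)|) 1_{τ(I)}(t)`. -/
def muFin (τ : DyadicI → DyadicI) (L : Finset DyadicI) (t : ℝ) : ℝ :=
  ((L.sup fun I =>
    Real.toNNReal (len I / len (τ I) * Set.indicator (toSet (τ I)) (fun _ => (1 : ℝ)) t) : ℝ≥0) : ℝ)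

/-- The point set `L* = ⋃_{I ∈ L} I` covered by a collection of dyadic intervals. -/
def pointSet (L : Set DyadicI) : Set ℝ := ⋃ I ∈ L, toSet I

/-- The constant `C₁ = sup_{H ⊆ τ(D), H ≠ ∅} (1/|σ(H)*|) ∫₀¹ μ_H(t) dt`, where
nonempty collections `H ⊆ τ(D)` are parametrized as `H = τ(L)` for nonempty `L ⊆ D`,
so that `σ(H)* = L*`. -/
def Cone (τ : DyadicI → DyadicI) : ℝ≥0∞ :=
  ⨆ (L : Set DyadicI) (_ : L.Nonempty),
    (∫⁻ t in Set.Icc (0 : ℝ) 1, muSet τ L t) / volume (pointSet L)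

/-- The square of the dyadic BMO norm of `g = ∑_{J ∈ s} a_J h_J`:
`‖g‖_{BMO}² = sup_{I ∈ D} (1/|I|) ∑_{J ⊆ I} a_J² |J|`. -/
def bmoSq (s : Finset DyadicI) (a : DyadicI → ℝ) : ℝ≥0∞ :=
  ⨆ I : DyadicI, ENNReal.ofReal
    ((∑ J ∈ s.filter fun J => toSet J ⊆ toSet I, a J ^ 2 * len J) / len I)

/-- The coefficients of `S_σ(g)` for `g = ∑_{J ∈ s} a_J h_J`, where `σ = τ⁻¹` on `τ(D)`:
`S_σ(h_J) = h_{σ(J)}` for `J ∈ τ(D)` and `S_σ(h_J) = 0` otherwise, so that the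
coefficient of `h_K` in `S_σ(g)` is `a_{τ(K)}` if `τ(K) ∈ s`, and `0` otherwise. -/
def sSigmaCoef (τ : DyadicI → DyadicI) (s : Finset DyadicI) (a : DyadicI → ℝ) :
    DyadicI → ℝ :=
  fun K => if τ K ∈ s then a (τ K) else 0

/-- The Haar support of `S_σ(g)` for `g` with Haar support `s`:
`σ(s ∩ τ(D))`, i.e. the preimage under `τ` of `s`. -/
def sSigmaSupp (τ : DyadicI → DyadicI) (s : Finset DyadicI) : Finset DyadicI :=
  (s.filter fun J => J ∈ Set.range τ).image (Function.invFun τ)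

/-- The operator norm `‖S_σ‖_{BMO} ∈ [0,∞]` of `S_σ` with respect to the dyadic BMO
norm, computed over finitely supported Haar expansions. -/
def bmoOpNorm (τ : DyadicI → DyadicI) : ℝ≥0∞ :=
  ⨆ (s : Finset DyadicI) (a : DyadicI → ℝ) (_ : bmoSq s a ≤ 1),
    (bmoSq (sSigmaSupp τ s) (sSigmaCoef τ s a)) ^ (1 / 2 : ℝ)

/-- The Carleson constant `⟦C⟧ = sup_{I ∈ C} (1/|I|) ∑_{J ∈ C, J ⊆ I} |J| ∈ [0,∞]`
of a collection of dyadic intervals. -/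
def carleson (C : Set DyadicI) : ℝ≥0∞ :=
  ⨆ (I : DyadicI) (_ : I ∈ C),
    (∑' J : {J : DyadicI // J ∈ C ∧ toSet J ⊆ toSet I}, ENNReal.ofReal (len J.1)) /
      ENNReal.ofReal (len I)

/-- The `L^p_X = L^p([0,1]; X)` (Bochner) norm of `f = ∑_{I ∈ s} x_I h_I`. -/
def LpNormV (p : ℝ) (s : Finset DyadicI) (x : DyadicI → X) : ℝ :=
  (∫ t in Set.Icc (0 : ℝ) 1, ‖∑ I ∈ s, haar I t • x I‖ ^ p) ^ (1 / p)

/-- The operator norm `‖T_{τ,p} ⊗ Id_X : L^p_X → L^p_X‖ ∈ [0,∞]`, computed over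
finitely supported Haar expansions. -/
def lpOpNorm (τ : DyadicI → DyadicI) (p : ℝ) (X : Type*) [NormedAddCommGroup X]
    [NormedSpace ℝ X] : ℝ≥0∞ :=
  ⨆ (s : Finset DyadicI) (x : DyadicI → X) (_ : LpNormV p s x ≤ 1),
    ENNReal.ofReal (LpNormV p (s.image τ) (rearrCoef τ p s x))

/-- The operator norm `‖T_{τ,p}^{-1} ⊗ Id_X‖ ∈ [0,∞]` on the span of
`{h_J : J ∈ τ(D)}` with the `L^p_X` norm: the map determined by
`x h_{τ(I)}/|τ(I)|^{1/p} ↦ x h_I/|I|^{1/p}`, i.e. sending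
`g = ∑_{I ∈ L} x_I h_{τ(I)}` to `∑_{I ∈ L} (|τ(I)|/|I|)^{1/p} x_I h_I`. -/
def lpInvOpNorm (τ : DyadicI → DyadicI) (p : ℝ) (X : Type*) [NormedAddCommGroup X]
    [NormedSpace ℝ X] : ℝ≥0∞ :=
  ⨆ (L : Finset DyadicI) (x : DyadicI → X)
    (_ : LpNormV p (L.image τ) (fun J => ∑ I ∈ L, if τ I = J then x I else 0) ≤ 1),
    ENNReal.ofReal (LpNormV p L fun I => ((len (τ I) / len I) ^ (1 / p)) • x I)

/-- The operator norm `‖T_{τ,1}^{-1}‖₁ ∈ [0,∞]` on the span of `{h_J : J ∈ τ(D)}`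
with the dyadic `H¹` norm: the map determined by `h_{τ(I)}/|τ(I)| ↦ h_I/|I|`,
i.e. sending `g = ∑_{I ∈ L} a_I h_{τ(I)}` to `∑_{I ∈ L} (|τ(I)|/|I|) a_I h_I`. -/
def h1InvOpNorm (τ : DyadicI → DyadicI) : ℝ≥0∞ :=
  ⨆ (L : Finset DyadicI) (a : DyadicI → ℝ)
    (_ : HpNormS 1 (L.image τ) (fun J => ∑ I ∈ L, if τ I = J then a I else 0) ≤ 1),
    ENNReal.ofReal (HpNormS 1 L fun I => (len (τ I) / len I) * a I)

/-- The Rademacher average `(E_ε ‖∑_{i<n} ε_i a_i‖^p)^{1/p}` over all choices of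
signs `ε_i ∈ {±1}`. -/
def radAvg (p : ℝ) {Y : Type*} [NormedAddCommGroup Y] [NormedSpace ℝ Y] (n : ℕ)
    (a : Fin n → Y) : ℝ :=
  ((∑ ε : Fin n → Bool, ‖∑ i, (if ε i then (1 : ℝ) else -1) • a i‖ ^ p) / 2 ^ n) ^ (1 / p)

/-- The type-`p` constant `Type_p(Y) ∈ [0,∞]`: the least `C` such that
`(E_ε ‖∑ ε_i a_i‖^p)^{1/p} ≤ C (∑ ‖a_i‖^p)^{1/p}` for all finite families in `Y`. -/
def typeConst (p : ℝ) (Y : Type*) [NormedAddCommGroup Y] [NormedSpace ℝ Y] : ℝ≥0∞ :=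
  sInf {C : ℝ≥0∞ | ∀ (n : ℕ) (a : Fin n → Y),
    ENNReal.ofReal (radAvg p n a) ≤ C * ENNReal.ofReal ((∑ i, ‖a i‖ ^ p) ^ (1 / p))}

/-- The UMD property of a Banach space `E`: for each `1 < r < ∞` the Haar system is
unconditional in `L^r_E`. -/
def IsUMD (E : Type*) [NormedAddCommGroup E] [NormedSpace ℝ E] : Prop :=
  ∀ r : ℝ, 1 < r → ∃ β : ℝ, ∀ (s : Finset DyadicI) (x : DyadicI → E) (ε : DyadicI → ℝ),
    (∀ I, ε I = 1 ∨ ε I = -1) →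
    LpNormV r s (fun I => ε I • x I) ≤ β * LpNormV r s x

/-- `B` is a block in `L` with top `I`: `B ⊆ L`, `I` is the unique maximal interval
of `B`, and `B` is order-convex in `L` between its elements and `I`. -/
def IsBlock (L : Set DyadicI) (B : Set DyadicI) (I : DyadicI) : Prop :=
  B ⊆ L ∧ I ∈ B ∧ (∀ J ∈ B, toSet J ⊆ toSet I) ∧
    ∀ J ∈ B, ∀ K ∈ L, toSet J ⊆ toSet K → toSet K ⊆ toSet I → K ∈ B

/-- `G₁(K | E)`: the maximal dyadic intervals of `E` strictly contained in `K`. -/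
def gen1 (K : DyadicI) (E : Set DyadicI) : Set DyadicI :=
  {J | J ∈ E ∧ toSet J ⊂ toSet K ∧
    ∀ J' ∈ E, toSet J' ⊂ toSet K → toSet J ⊆ toSet J' → J' = J}

end Defs

/-!
Sort the intervals in the Haar support of `f` into levels: `I` is at level `n` if the square
function of the part of `f` carried by the ancestors of `I` is about `2 ^ n` on `I`. At a point `t`
the smallest interval of a level controls the whole level, so level `n` contributes at most about
`2 ^ n` to `𝕊(f)(t)`, and only if `2 ^ n ≤ 𝕊(f)(t)`. Multiplying level `n` by `2 ^ (n (q / p - 1))`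
and summing geometric series yields `g` with `𝕊(g) ≲ 𝕊(f) ^ (q / p)`, so that `g` is bounded in
`H^p` when `f` is in the unit ball of `H^q`.

Let `D_n` be the intervals at level `n`, and `M = ∑_n 2 ^ (n q) μ_{τ(D_n)}`. The coefficient of
`T_{τ,q} f` at `τ(I)` is that of `T_{τ,p} g` times `(2 ^ (n q) |I| / |τ(I)|) ^ (1 / q - 1 / p)`,
which is at most `M ^ (1 / q - 1 / p)` on `τ(I)`. The contraction principle therefore gives
`𝕊(T_{τ,q} f) ≤ M ^ (1 / q - 1 / p) 𝕊(T_{τ,p} g)` pointwise. Since the union of `D_n` lies in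
`{𝕊(f) ≥ 2 ^ n}`, the integral of `M` is at most `C₁ ∑_n 2 ^ (n q) |{𝕊(f) ≥ 2 ^ n}| ≲ C₁`, and
Hölder's inequality concludes.
-/

section Rademacher

variable {ι X : Type*} [Fintype ι] [SeminormedAddCommGroup X] [NormedSpace ℝ X]

variable (ι X) in
/-- The Rademacher seminorm `v ↦ (E_ε ‖∑ᵢ εᵢ vᵢ‖²)^{1/2}` on finite families in `X`. It is encoded
as the `ℓ²` norm of the linear image `ε ↦ 2^{-|ι|/2} ∑ᵢ εᵢ vᵢ`, which makes it a seminorm. -/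
def rademacherSeminorm : Seminorm ℝ (ι → X) :=
  (normSeminorm ℝ (PiLp 2 fun _ : ι → Bool => X)).comp
    ((WithLp.linearEquiv 2 ℝ ((ι → Bool) → X)).symm.toLinearMap ∘ₗ
      LinearMap.pi fun ε =>
        (√(2 ^ Fintype.card ι))⁻¹ • ∑ i, (if ε i then (1 : ℝ) else -1) • LinearMap.proj i)

lemma rademacherSeminorm_apply (v : ι → X) :
    rademacherSeminorm ι X v =
      √((∑ ε : ι → Bool, ‖∑ i, (if ε i then (1 : ℝ) else -1) • v i‖ ^ 2) /
        2 ^ Fintype.card ι) := by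
  simp only [rademacherSeminorm, Seminorm.comp_apply, coe_normSeminorm, PiLp.norm_eq_of_L2]
  congr 1
  rw [Finset.sum_div]
  refine Finset.sum_congr rfl fun ε _ => ?_
  have hcard : (0 : ℝ) ≤ 2 ^ Fintype.card ι := by positivity
  simp [LinearMap.sum_apply, norm_smul, mul_pow, Real.sq_sqrt hcard, div_eq_inv_mul, -ite_smul]

lemma rademacherSeminorm_sign_smul {η : ι → ℝ} (hη : ∀ i, η i = 1 ∨ η i = -1) (v : ι → X) :
    rademacherSeminorm ι X (fun i => η i • v i) = rademacherSeminorm ι X v := by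
  simp only [rademacherSeminorm_apply]
  congr 2
  let flip : (ι → Bool) ≃ (ι → Bool) :=
    Equiv.piCongrRight fun i => if η i = 1 then Equiv.refl Bool else Equiv.boolNot
  refine Fintype.sum_equiv flip _ _ fun ε => ?_
  congr 2
  refine Finset.sum_congr rfl fun i _ => ?_
  rw [smul_smul]
  congr 1
  have hne : (-1 : ℝ) ≠ 1 := by norm_num
  rcases hη i with h | h <;> cases hε : ε i <;> simp [flip, h, hε, hne]

/-- The set of admissible multipliers is convex and contains the extreme points `{±1}^ι` of the
cube `[-1,1]^ι`. -/
lemma rademacherSeminorm_smul_le_of_abs_le_one {a : ι → ℝ} (ha : ∀ i, |a i| ≤ 1) (v : ι → X) :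
    rademacherSeminorm ι X (fun i => a i • v i) ≤ rademacherSeminorm ι X v := by
  let multiply : (ι → ℝ) →ₗ[ℝ] (ι → X) :=
    LinearMap.pi fun i => (LinearMap.proj i).smulRight (v i)
  let ball := (rademacherSeminorm ι X).closedBall 0 (rademacherSeminorm ι X v)
  have hconvex : Convex ℝ (multiply ⁻¹' ball) :=
    (Seminorm.convex_closedBall _ _ _).linear_preimage multiply
  have hsigns : univ.pi (fun _ : ι => ({-1, 1} : Set ℝ)) ⊆ multiply ⁻¹' ball := by
    intro η hη
    have hη' : ∀ i, η i = 1 ∨ η i = -1 := fun i => (hη i (mem_univ i)).symm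
    exact (Seminorm.mem_closedBall_zero _).2 (rademacherSeminorm_sign_smul hη' v).le
  have hcube : a ∈ convexHull ℝ (univ.pi fun _ : ι => ({-1, 1} : Set ℝ)) := by
    rw [convexHull_pi]
    intro i _
    rw [convexHull_pair, segment_eq_Icc (by norm_num)]
    exact abs_le.mp (ha i)
  exact (Seminorm.mem_closedBall_zero _).1 (convexHull_min hsigns hconvex hcube)

/-- Kahane's contraction principle. -/
lemma rademacherSeminorm_smul_le {C : ℝ} {a : ι → ℝ} (ha : ∀ i, |a i| ≤ C) (hC : 0 ≤ C)
    (v : ι → X) :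
    rademacherSeminorm ι X (fun i => a i • v i) ≤ C * rademacherSeminorm ι X v := by
  have hscaled (i : ι) : |a i / C| ≤ 1 := by
    rw [abs_div, abs_of_nonneg hC]
    exact div_le_one_of_le₀ (ha i) hC
  have hfactor : (fun i => a i • v i) = C • fun i => (a i / C) • v i := by
    ext i
    rcases hC.eq_or_lt with rfl | hC
    · simp [abs_nonpos_iff.1 (ha i)]
    · rw [Pi.smul_apply, smul_smul, mul_div_cancel₀ _ hC.ne']
  rw [hfactor, map_smul_eq_mul, Real.norm_of_nonneg hC]
  gcongr
  exact rademacherSeminorm_smul_le_of_abs_le_one hscaled v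

lemma rademacherSeminorm_single [DecidableEq ι] (i : ι) (x : X) :
    rademacherSeminorm ι X (Pi.single i x) = ‖x‖ := by
  have hterm (ε : ι → Bool) :
      ‖∑ j, (if ε j then (1 : ℝ) else -1) • (Pi.single i x : ι → X) j‖ = ‖x‖ := by
    rw [Finset.sum_eq_single_of_mem i (Finset.mem_univ i) fun j _ hj => by simp [hj]]
    cases ε i <;> simp
  simp only [rademacherSeminorm_apply, hterm]
  simp

lemma norm_le_rademacherSeminorm (v : ι → X) (i : ι) : ‖v i‖ ≤ rademacherSeminorm ι X v := by
  have hsingle : (Pi.single i (v i) : ι → X) = fun j => (Pi.single i (1 : ℝ) : ι → ℝ) j • v j := by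
    ext j
    by_cases h : j = i
    · subst h; simp
    · simp [h]
  rw [← rademacherSeminorm_single i (v i), hsingle]
  refine rademacherSeminorm_smul_le_of_abs_le_one (fun j => ?_) v
  by_cases h : j = i
  · subst h; simp
  · simp [h]

lemma rademacherSeminorm_le_sum_norm (v : ι → X) :
    rademacherSeminorm ι X v ≤ ∑ i, ‖v i‖ := by
  conv_lhs => rw [← Finset.univ_sum_single v]
  refine (Finset.le_sum_of_subadditive _ (map_zero _).le (map_add_le_add _) _ _).trans_eq ?_
  simp only [rademacherSeminorm_single]

end Rademacher

namespace DyadicI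

lemma len_pos (I : DyadicI) : 0 < I.len := zpow_pos two_pos _

lemma mem_toSet_iff_floor_eq {I : DyadicI} {t : ℝ} : t ∈ I.toSet ↔ ⌊t * 2 ^ I.n⌋ = I.k := by
  have hpow : (0 : ℝ) < 2 ^ I.n := by positivity
  rw [Int.floor_eq_iff, toSet, lep, len, mem_Ico, zpow_neg, zpow_natCast, ← div_eq_mul_inv,
    div_le_iff₀ hpow, ← one_div, ← add_div, lt_div_iff₀ hpow, Int.cast_natCast]

lemma floor_mul_two_pow_eq_ediv {m n : ℕ} (h : m ≤ n) (t : ℝ) :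
    ⌊t * 2 ^ m⌋ = ⌊t * 2 ^ n⌋ / ((2 ^ (n - m) : ℕ) : ℤ) := by
  rw [← Int.floor_div_natCast]
  congr 1
  push_cast
  rw [eq_div_iff (by positivity), mul_assoc, ← pow_add, Nat.add_sub_cancel' h]

lemma toSet_subset_toSet {I J : DyadicI} {t : ℝ} (hI : t ∈ I.toSet) (hJ : t ∈ J.toSet)
    (h : J.n ≤ I.n) : I.toSet ⊆ J.toSet := by
  intro u hu
  rw [mem_toSet_iff_floor_eq] at *
  rw [floor_mul_two_pow_eq_ediv h] at hJ ⊢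
  rw [hu, ← hI, hJ]

lemma toSet_subset_Icc (I : DyadicI) : I.toSet ⊆ Icc 0 1 := by
  have hk : (I.k : ℝ) + 1 ≤ 2 ^ I.n := by exact_mod_cast I.hk
  have hpow : (0 : ℝ) < 2 ^ I.n := by positivity
  refine Ico_subset_Icc_self.trans (Icc_subset_Icc ?_ ?_)
  · exact mul_nonneg I.k.cast_nonneg I.len_pos.le
  · rwa [lep, len, ← add_one_mul, zpow_neg, zpow_natCast, ← div_eq_mul_inv, div_le_one hpow]

lemma measurableSet_toSet (I : DyadicI) : MeasurableSet I.toSet := measurableSet_Ico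

lemma volume_toSet_pos (I : DyadicI) : 0 < volume I.toSet := by
  simp [toSet, I.len_pos]

instance : Countable DyadicI :=
  Function.Injective.countable (f := fun I : DyadicI => (I.n, I.k)) <| by
    rintro ⟨n, k, _⟩ ⟨n', k', _⟩ h
    simpa using h

lemma abs_haar (I : DyadicI) (t : ℝ) : |I.haar t| = I.toSet.indicator 1 t := by
  have hlen := I.len_pos
  rw [haar, indicator_apply]
  simp only [toSet, mem_Ico]
  split_ifs <;> simp only [Pi.one_apply, abs_neg, abs_one, abs_zero] <;> grind

lemma abs_haar_of_mem {I : DyadicI} {t : ℝ} (h : t ∈ I.toSet) : |I.haar t| = 1 := by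
  simp [abs_haar, h]

lemma haar_of_notMem {I : DyadicI} {t : ℝ} (h : t ∉ I.toSet) : I.haar t = 0 := by
  simp [← abs_eq_zero, abs_haar, h]

lemma abs_haar_le_one (I : DyadicI) (t : ℝ) : |I.haar t| ≤ 1 := by
  rw [abs_haar]
  exact indicator_le_self' (fun _ _ => zero_le_one) t

lemma measurable_haar (I : DyadicI) : Measurable I.haar :=
  Measurable.ite measurableSet_Ico measurable_const
    (Measurable.ite measurableSet_Ico measurable_const measurable_const)

end DyadicI

lemma measurableSet_pointSet (L : Set DyadicI) : MeasurableSet (pointSet L) :=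
  MeasurableSet.biUnion L.to_countable fun I _ => I.measurableSet_toSet

lemma pointSet_subset_Icc (L : Set DyadicI) : pointSet L ⊆ Icc 0 1 :=
  iUnion₂_subset fun I _ => I.toSet_subset_Icc

lemma volume_pointSet_ne_top (L : Set DyadicI) : volume (pointSet L) ≠ ∞ :=
  measure_ne_top_of_subset (pointSet_subset_Icc L) (by simp)

lemma volume_pointSet_ne_zero {L : Set DyadicI} (hL : L.Nonempty) : volume (pointSet L) ≠ 0 := by
  obtain ⟨I, hI⟩ := hL
  have hsubset : I.toSet ⊆ pointSet L := subset_biUnion_of_mem (u := toSet) hI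
  exact (I.volume_toSet_pos.trans_le (measure_mono hsubset)).ne'

section SquareFunction

variable {X : Type*} [NormedAddCommGroup X] [NormedSpace ℝ X]
  {s : Finset DyadicI} {x y : DyadicI → X} {t p : ℝ}

lemma sqFn_eq_rademacherSeminorm (s : Finset DyadicI) (x : DyadicI → X) (t : ℝ) :
    sqFn s x t = rademacherSeminorm s X fun I => haar I.1 t • x I := by
  simp only [sqFn, rademacherSeminorm_apply, mul_smul, Finset.univ_eq_attach, Fintype.card_coe]
  congr!

lemma sqFn_nonneg (s : Finset DyadicI) (x : DyadicI → X) (t : ℝ) : 0 ≤ sqFn s x t :=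
  Real.sqrt_nonneg _

lemma sqFn_smul (c : ℝ) (s : Finset DyadicI) (x : DyadicI → X) (t : ℝ) :
    sqFn s (c • x) t = |c| * sqFn s x t := by
  simp only [sqFn_eq_rademacherSeminorm, Pi.smul_apply, ← Real.norm_eq_abs, ← map_smul_eq_mul,
    smul_comm _ c]
  rfl

lemma sqFn_sum_le {κ : Type*} (N : Finset κ) (s : Finset DyadicI) (x : κ → DyadicI → X) (t : ℝ) :
    sqFn s (∑ n ∈ N, x n) t ≤ ∑ n ∈ N, sqFn s (x n) t := by
  have hsum : (fun I : s => haar I.1 t • (∑ n ∈ N, x n) I) =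
      ∑ n ∈ N, fun I : s => haar I.1 t • x n I := by
    ext I
    simp only [Finset.sum_apply, Finset.smul_sum]
  simp only [sqFn_eq_rademacherSeminorm, hsum]
  exact Finset.le_sum_of_subadditive _ (map_zero _).le (map_add_le_add _) _ _

lemma sqFn_le_mul_sqFn {C : ℝ} (hC : 0 ≤ C)
    (h : ∀ I ∈ s, t ∈ toSet I → ∃ c : ℝ, |c| ≤ C ∧ y I = c • x I) :
    sqFn s y t ≤ C * sqFn s x t := by
  have hmultiplier (I : s) :
      ∃ c : ℝ, |c| ≤ C ∧ haar I.1 t • y I = c • haar I.1 t • x I := by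
    by_cases ht : t ∈ toSet I.1
    · obtain ⟨c, hc, hcx⟩ := h I I.2 ht
      exact ⟨c, hc, by rw [hcx, smul_comm]⟩
    · exact ⟨0, by simpa, by simp [haar_of_notMem ht]⟩
  choose c hc hcx using hmultiplier
  simp only [sqFn_eq_rademacherSeminorm, hcx]
  exact rademacherSeminorm_smul_le hc hC _

lemma sqFn_congr (h : ∀ I ∈ s, t ∈ toSet I → y I = x I) : sqFn s y t = sqFn s x t := by
  simp only [sqFn_eq_rademacherSeminorm]
  congr 1
  ext I
  by_cases ht : t ∈ toSet I.1
  · rw [h I I.2 ht]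
  · simp [haar_of_notMem ht]

lemma sqFn_le_sum_norm (s : Finset DyadicI) (x : DyadicI → X) (t : ℝ) :
    sqFn s x t ≤ ∑ I : s, ‖x I‖ := by
  rw [sqFn_eq_rademacherSeminorm]
  refine (rademacherSeminorm_le_sum_norm _).trans (Finset.sum_le_sum fun I _ => ?_)
  rw [norm_smul]
  exact mul_le_of_le_one_left (norm_nonneg _) (abs_haar_le_one _ _)

lemma measurable_sqFn (s : Finset DyadicI) (x : DyadicI → X) : Measurable (sqFn s x) := by
  refine Measurable.sqrt (.div_const (Finset.measurable_sum _ fun ε _ => ?_) _)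
  refine (StronglyMeasurable.norm (Finset.stronglyMeasurable_fun_sum _ fun I _ => ?_)).measurable
    |>.pow_const 2
  exact (measurable_const.mul I.1.measurable_haar).stronglyMeasurable.smul_const _

lemma integrableOn_sqFn_rpow (hp : 0 ≤ p) (s : Finset DyadicI) (x : DyadicI → X) :
    IntegrableOn (fun t => sqFn s x t ^ p) (Icc 0 1) := by
  refine Integrable.of_bound ((measurable_sqFn s x).pow_const p).aestronglyMeasurable
    ((∑ I : s, ‖x I‖) ^ p) (.of_forall fun t => ?_)
  rw [Real.norm_of_nonneg (Real.rpow_nonneg (sqFn_nonneg s x t) _)]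
  exact Real.rpow_le_rpow (sqFn_nonneg s x t) (sqFn_le_sum_norm s x t) hp

lemma ofReal_hpNormV (hp : 0 ≤ p) (s : Finset DyadicI) (x : DyadicI → X) :
    ENNReal.ofReal (HpNormV p s x) =
      (∫⁻ t in Icc 0 1, ENNReal.ofReal (sqFn s x t) ^ p) ^ (1 / p) := by
  have hnonneg (t : ℝ) : 0 ≤ sqFn s x t ^ p := Real.rpow_nonneg (sqFn_nonneg s x t) _
  rw [HpNormV, ← ENNReal.ofReal_rpow_of_nonneg (integral_nonneg hnonneg) (by positivity),
    ofReal_integral_eq_lintegral_ofReal (integrableOn_sqFn_rpow hp s x) (.of_forall hnonneg)]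
  simp only [ENNReal.ofReal_rpow_of_nonneg (sqFn_nonneg s x _) hp]

lemma hpNormV_le_iff (hp : 0 < p) {K : ℝ} (hK : 0 ≤ K) :
    HpNormV p s x ≤ K ↔
      ∫⁻ t in Icc 0 1, ENNReal.ofReal (sqFn s x t) ^ p ≤ ENNReal.ofReal K ^ p := by
  rw [← ENNReal.ofReal_le_ofReal_iff hK, ofReal_hpNormV hp.le, one_div,
    ENNReal.rpow_inv_le_iff hp]

lemma hpNormV_smul (hp : 0 < p) (c : ℝ) (s : Finset DyadicI) (x : DyadicI → X) :
    HpNormV p s (c • x) = |c| * HpNormV p s x := by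
  simp only [HpNormV, sqFn_smul, Real.mul_rpow (abs_nonneg c) (sqFn_nonneg s x _),
    integral_const_mul]
  rw [Real.mul_rpow (by positivity)
    (integral_nonneg fun t => Real.rpow_nonneg (sqFn_nonneg s x t) _),
    ← Real.rpow_mul (abs_nonneg c), mul_one_div_cancel hp.ne', Real.rpow_one]

end SquareFunction

section Rearrangement

variable {X : Type*} [NormedAddCommGroup X] [NormedSpace ℝ X]
  {τ : DyadicI → DyadicI} {s : Finset DyadicI} {x : DyadicI → X} {p : ℝ}

lemma rearrCoef_apply (hτ : Function.Injective τ) (p : ℝ) (x : DyadicI → X) {I : DyadicI}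
    (hI : I ∈ s) :
    rearrCoef τ p s x (τ I) = (len I / len (τ I)) ^ (1 / p) • x I := by
  simp [rearrCoef, hτ.eq_iff, hI]

lemma rearrCoef_smul (c : ℝ) (τ : DyadicI → DyadicI) (p : ℝ) (s : Finset DyadicI)
    (x : DyadicI → X) : rearrCoef τ p s (c • x) = c • rearrCoef τ p s x := by
  ext J
  simp only [rearrCoef, Pi.smul_apply, Finset.smul_sum, smul_ite, smul_zero, smul_comm c]

lemma ofReal_hpNormV_rearrCoef_le (hp : 0 < p) {K : ℝ} (hK : 0 < K) (h : HpNormV p s x ≤ K) :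
    ENNReal.ofReal (HpNormV p (s.image τ) (rearrCoef τ p s x)) ≤
      ENNReal.ofReal K * hpOpNorm τ p X := by
  have hunit : HpNormV p s (K⁻¹ • x) ≤ 1 := by
    rwa [hpNormV_smul hp, abs_of_pos (inv_pos.2 hK), inv_mul_le_one₀ hK]
  have hrescale : x = K • K⁻¹ • x := by rw [smul_smul, mul_inv_cancel₀ hK.ne', one_smul]
  rw [hrescale, rearrCoef_smul, hpNormV_smul hp, abs_of_pos hK, ENNReal.ofReal_mul hK.le]
  gcongr
  exact le_iSup_of_le s (le_iSup₂_of_le (K⁻¹ • x) hunit le_rfl)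

lemma measurable_muSet (τ : DyadicI → DyadicI) (L : Set DyadicI) : Measurable (muSet τ L) := by
  refine Measurable.biSup _ L.to_countable fun I _ => ?_
  exact (measurable_const.mul
    (measurable_const.indicator (τ I).measurableSet_toSet)).ennreal_ofReal

lemma muSet_lt_top (τ : DyadicI → DyadicI) (L : Finset DyadicI) (t : ℝ) :
    muSet τ L t < ∞ := by
  simp only [muSet, SetLike.mem_coe, ← Finset.sup_eq_iSup]
  exact (Finset.sup_lt_iff ENNReal.zero_lt_top).2 fun _ _ => ENNReal.ofReal_lt_top

lemma ofReal_len_div_len_le_muSet {L : Set DyadicI} {I : DyadicI} (hI : I ∈ L) {t : ℝ}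
    (ht : t ∈ toSet (τ I)) : ENNReal.ofReal (len I / len (τ I)) ≤ muSet τ L t :=
  le_iSup₂_of_le I hI (by simp [ht])

lemma lintegral_muSet_le (τ : DyadicI → DyadicI) (L : Set DyadicI) :
    ∫⁻ t in Icc 0 1, muSet τ L t ≤ Cone τ * volume (pointSet L) := by
  rcases L.eq_empty_or_nonempty with rfl | hL
  · simp [muSet]
  rw [← ENNReal.div_le_iff_le_mul (.inl (volume_pointSet_ne_zero hL))
    (.inl (volume_pointSet_ne_top L))]
  exact le_iSup₂_of_le L hL le_rfl

end Rearrangement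

section GeometricSeries

/-- The sum `∑_{k ≥ 0} 2^{-kα}` of the geometric series, for `α > 0`. -/
def dyadicGeomSum (α : ℝ) : ℝ := (1 - 2 ^ (-α))⁻¹

lemma one_sub_two_rpow_neg_pos {α : ℝ} (hα : 0 < α) : (0 : ℝ) < 1 - 2 ^ (-α) :=
  sub_pos.2 (Real.rpow_lt_one_of_one_lt_of_neg one_lt_two (neg_neg_of_pos hα))

lemma one_le_dyadicGeomSum {α : ℝ} (hα : 0 < α) : 1 ≤ dyadicGeomSum α :=
  (one_le_inv₀ (one_sub_two_rpow_neg_pos hα)).2 (sub_le_self _ (by positivity))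

lemma dyadicGeomSum_pos {α : ℝ} (hα : 0 < α) : 0 < dyadicGeomSum α :=
  zero_lt_one.trans_le (one_le_dyadicGeomSum hα)

lemma dyadicGeomSum_le_dyadicGeomSum {α β : ℝ} (hα : 0 < α) (h : α ≤ β) :
    dyadicGeomSum β ≤ dyadicGeomSum α := by
  have hpos := one_sub_two_rpow_neg_pos hα
  unfold dyadicGeomSum
  gcongr
  exact one_le_two

lemma sum_zpow_le {β : ℝ} (hβ : 1 < β) {N : Finset ℤ} {m : ℤ} (hN : ∀ n ∈ N, n ≤ m) :
    ∑ n ∈ N, β ^ n ≤ (1 - β⁻¹)⁻¹ * β ^ m := by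
  have hβ0 : 0 < β := zero_lt_one.trans hβ
  have hinv : β⁻¹ < 1 := inv_lt_one_of_one_lt₀ hβ
  have hterm : ∀ n ∈ N, β ^ n = β⁻¹ ^ (m - n).toNat * β ^ m := by
    intro n hn
    rw [← zpow_natCast, Int.toNat_of_nonneg (sub_nonneg.2 (hN n hn)), inv_zpow',
      ← zpow_add₀ hβ0.ne']
    congr 1
    ring
  have hinj : InjOn (fun n => (m - n).toNat) N := by
    intro a ha b hb hab
    have := hN a ha
    have := hN b hb
    dsimp only at hab
    omega
  rw [Finset.sum_congr rfl hterm, ← Finset.sum_mul,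
    ← Finset.sum_image (f := fun k : ℕ => β⁻¹ ^ k) hinj,
    ← tsum_geometric_of_lt_one (by positivity) hinv]
  gcongr
  exact (summable_geometric_of_lt_one (by positivity) hinv).sum_le_tsum _ fun _ _ => by positivity

lemma sum_two_zpow_rpow_le {α S : ℝ} (hα : 0 < α) (hS : 0 ≤ S) (N : Finset ℤ) :
    ∑ n ∈ N with (2 : ℝ) ^ n ≤ S, ((2 : ℝ) ^ n) ^ α ≤ dyadicGeomSum α * S ^ α := by
  have hswap (n : ℤ) : ((2 : ℝ) ^ n) ^ α = (2 ^ α) ^ n := by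
    rw [← Real.rpow_intCast, ← Real.rpow_intCast, ← Real.rpow_mul zero_le_two,
      ← Real.rpow_mul zero_le_two, mul_comm]
  rcases hS.eq_or_lt with rfl | hS
  · have hempty : N.filter (fun n => (2 : ℝ) ^ n ≤ 0) = ∅ :=
      Finset.filter_false_of_mem fun n _ => (zpow_pos two_pos n).not_ge
    simp [hempty, Real.zero_rpow hα.ne']
  obtain ⟨m, hm, hSm⟩ := exists_mem_Ico_zpow hS one_lt_two
  calc ∑ n ∈ N with (2 : ℝ) ^ n ≤ S, ((2 : ℝ) ^ n) ^ α
      = ∑ n ∈ N with (2 : ℝ) ^ n ≤ S, ((2 : ℝ) ^ α) ^ n := Finset.sum_congr rfl fun n _ => hswap n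
    _ ≤ (1 - ((2 : ℝ) ^ α)⁻¹)⁻¹ * (2 ^ α) ^ m := by
        refine sum_zpow_le (Real.one_lt_rpow one_lt_two hα) fun n hn => ?_
        have hnS : (2 : ℝ) ^ n ≤ S := (Finset.mem_filter.1 hn).2
        exact Int.lt_add_one_iff.1 ((zpow_lt_zpow_iff_right₀ one_lt_two).1 (hnS.trans_lt hSm))
    _ = dyadicGeomSum α * ((2 : ℝ) ^ m) ^ α := by
        rw [dyadicGeomSum, hswap, Real.rpow_neg zero_le_two]
    _ ≤ dyadicGeomSum α * S ^ α := by
        have := dyadicGeomSum_pos hα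
        gcongr

end GeometricSeries

lemma lintegral_rpow_mul_rpow_le {Ω : Type*} [MeasurableSpace Ω] {μ : Measure Ω} {q p : ℝ}
    {M g : Ω → ℝ≥0∞} (hM : AEMeasurable M μ) (hg : AEMeasurable g μ) (hq : 0 < q) (hqp : q ≤ p) :
    (∫⁻ t, (M t ^ (1 / q - 1 / p) * g t) ^ q ∂μ) ^ (1 / q) ≤
      (∫⁻ t, M t ∂μ) ^ (1 / q - 1 / p) * (∫⁻ t, g t ^ p ∂μ) ^ (1 / p) := by
  have hp : 0 < p := hq.trans_le hqp
  have hexponent : (1 / q - 1 / p) * q = 1 - q / p := by field_simp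
  have hconjugate : 0 ≤ 1 - q / p := sub_nonneg.2 (div_le_one_of_le₀ hqp hp.le)
  have hintegrand (t : Ω) :
      (M t ^ (1 / q - 1 / p) * g t) ^ q = M t ^ (1 - q / p) * (g t ^ p) ^ (q / p) := by
    rw [ENNReal.mul_rpow_of_nonneg _ _ hq.le, ← ENNReal.rpow_mul, ← ENNReal.rpow_mul, hexponent,
      mul_div_cancel₀ _ hp.ne']
  have hholder : ∫⁻ t, (M t ^ (1 / q - 1 / p) * g t) ^ q ∂μ ≤
      (∫⁻ t, M t ∂μ) ^ (1 - q / p) * (∫⁻ t, g t ^ p ∂μ) ^ (q / p) := by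
    simp only [hintegrand]
    exact ENNReal.lintegral_mul_norm_pow_le hM (hg.pow_const p) hconjugate (by positivity)
      (sub_add_cancel 1 (q / p))
  rw [one_div q, ENNReal.rpow_inv_le_iff hq, ← one_div, ENNReal.mul_rpow_of_nonneg _ _ hq.le,
    ← ENNReal.rpow_mul, ← ENNReal.rpow_mul, hexponent, one_div_mul_eq_div]
  exact hholder

section Levels

variable {X : Type*} [NormedAddCommGroup X] [NormedSpace ℝ X]
  {s : Finset DyadicI} {x y : DyadicI → X} {I : DyadicI} {n : ℤ} {t : ℝ}

/-- The predictable square function: the constant value on `I` of the square function of the part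
`∑_{J ⊇ I} x_J h_J` of `f`. The signs of the Haar functions are omitted, since Rademacher averages
do not see them. -/
def branchSqFn (s : Finset DyadicI) (x : DyadicI → X) (I : DyadicI) : ℝ :=
  rademacherSeminorm s X fun J => if toSet I ⊆ toSet J.1 then x J else 0

/-- The stopping level of `I`: the integer `n` with `2^n ≤ branchSqFn s x I < 2^(n+1)`, and the
junk value `0` when `branchSqFn s x I = 0`. -/
def level (s : Finset DyadicI) (x : DyadicI → X) (I : DyadicI) : ℤ :=
  Int.log 2 (branchSqFn s x I)

/-- The intervals of `s` at level `n`; those with vanishing `branchSqFn` belong to no level. -/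
def levelSet (s : Finset DyadicI) (x : DyadicI → X) (n : ℤ) : Finset DyadicI :=
  {I ∈ s | 0 < branchSqFn s x I ∧ level s x I = n}

lemma norm_le_branchSqFn (x : DyadicI → X) (hI : I ∈ s) : ‖x I‖ ≤ branchSqFn s x I := by
  simpa [branchSqFn] using norm_le_rademacherSeminorm
    (fun J : s => if toSet I ⊆ toSet J.1 then x J else 0) ⟨I, hI⟩

lemma branchSqFn_le_sqFn (s : Finset DyadicI) (x : DyadicI → X) (ht : t ∈ toSet I) :
    branchSqFn s x I ≤ sqFn s x t := by
  have hbranch (J : s) : (if toSet I ⊆ toSet J.1 then x J else 0) =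
      (if toSet I ⊆ toSet J.1 then haar J.1 t else 0) • haar J.1 t • x J := by
    split_ifs with h
    · rw [smul_smul, ← abs_mul_abs_self, abs_haar_of_mem (h ht), one_mul, one_smul]
    · rw [zero_smul]
  simp only [branchSqFn, sqFn_eq_rademacherSeminorm, hbranch]
  refine rademacherSeminorm_smul_le_of_abs_le_one (fun J => ?_) _
  split_ifs
  · exact abs_haar_le_one _ _
  · simp

lemma sqFn_le_branchSqFn
    (h : ∀ J ∈ s, t ∈ toSet J → y J = 0 ∨ toSet I ⊆ toSet J ∧ y J = x J) :
    sqFn s y t ≤ branchSqFn s x I := by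
  have hmultiplier (J : s) : ∃ c : ℝ, |c| ≤ 1 ∧
      haar J.1 t • y J = c • if toSet I ⊆ toSet J.1 then x J else 0 := by
    by_cases ht : t ∈ toSet J.1
    · rcases h J J.2 ht with hzero | ⟨hsubset, hy⟩
      · exact ⟨0, by simp, by simp [hzero]⟩
      · exact ⟨haar J.1 t, abs_haar_le_one _ _, by rw [if_pos hsubset, hy]⟩
    · exact ⟨0, by simp, by simp [haar_of_notMem ht]⟩
  choose c hc hcx using hmultiplier
  simp only [sqFn_eq_rademacherSeminorm, hcx]
  exact rademacherSeminorm_smul_le_of_abs_le_one hc _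

lemma mem_levelSet_level (hI : I ∈ s) (hx : x I ≠ 0) : I ∈ levelSet s x (level s x I) :=
  Finset.mem_filter.2 ⟨hI, (norm_pos_iff.2 hx).trans_le (norm_le_branchSqFn x hI), rfl⟩

lemma level_eq_of_mem_levelSet (hI : I ∈ levelSet s x n) : level s x I = n :=
  (Finset.mem_filter.1 hI).2.2

lemma branchSqFn_lt_of_mem_levelSet (hI : I ∈ levelSet s x n) :
    branchSqFn s x I < 2 * 2 ^ n := by
  rw [← zpow_one_add₀ two_ne_zero, ← level_eq_of_mem_levelSet hI, add_comm]
  exact_mod_cast Int.lt_zpow_succ_log_self (b := 2) one_lt_two (branchSqFn s x I)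

lemma two_zpow_le_sqFn (hI : I ∈ levelSet s x n) (ht : t ∈ toSet I) : (2 : ℝ) ^ n ≤ sqFn s x t := by
  obtain ⟨_, hpos, rfl⟩ := Finset.mem_filter.1 hI
  refine le_trans ?_ (branchSqFn_le_sqFn s x ht)
  exact_mod_cast Int.zpow_log_le_self (b := 2) one_lt_two hpos

lemma sqFn_indicator_levelSet_eq_zero (h : ∀ I ∈ levelSet s x n, t ∉ toSet I) :
    sqFn s ((levelSet s x n : Set DyadicI).indicator x) t = 0 := by
  have hzero : sqFn s ((0 : ℝ) • x) t = 0 := by rw [sqFn_smul, abs_zero, zero_mul]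
  rw [← hzero]
  refine sqFn_congr fun I _ ht => ?_
  rw [zero_smul, Pi.zero_apply, indicator_of_notMem fun hI => h I hI ht]

/-- The smallest interval `I ∋ t` of the level controls the whole level at `t`, because every other
one is an ancestor of `I` and hence counted in `branchSqFn s x I`. -/
lemma sqFn_indicator_levelSet_le (s : Finset DyadicI) (x : DyadicI → X) (n : ℤ) (t : ℝ) :
    sqFn s ((levelSet s x n : Set DyadicI).indicator x) t ≤
      if (2 : ℝ) ^ n ≤ sqFn s x t then 2 * 2 ^ n else 0 := by
  rcases ((levelSet s x n).filter (t ∈ toSet ·)).eq_empty_or_nonempty with hempty | hne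
  · rw [sqFn_indicator_levelSet_eq_zero (Finset.filter_eq_empty_iff.1 hempty)]
    positivity
  obtain ⟨I, hI, hsmallest⟩ := Finset.exists_max_image _ DyadicI.n hne
  obtain ⟨hlevel, ht⟩ := Finset.mem_filter.1 hI
  rw [if_pos (two_zpow_le_sqFn hlevel ht)]
  refine (sqFn_le_branchSqFn fun J _ hJt => ?_).trans (branchSqFn_lt_of_mem_levelSet hlevel).le
  by_cases hJ : J ∈ levelSet s x n
  · have hdepth : J.n ≤ I.n := hsmallest J (Finset.mem_filter.2 ⟨hJ, hJt⟩)
    exact .inr ⟨toSet_subset_toSet ht hJt hdepth, indicator_of_mem hJ x⟩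
  · exact .inl (indicator_of_notMem hJ x)

lemma sum_smul_indicator_levelSet (c : ℤ → ℝ) (x : DyadicI → X) (hI : I ∈ s) :
    (∑ n ∈ s.image (level s x), c n • (levelSet s x n : Set DyadicI).indicator x) I =
      c (level s x I) • x I := by
  rw [Finset.sum_apply, Finset.sum_eq_single_of_mem _ (Finset.mem_image_of_mem _ hI)]
  · by_cases hx : x I = 0
    · simp [hx, indicator_apply]
    · rw [Pi.smul_apply, indicator_of_mem (mem_levelSet_level hI hx)]
  · intro n _ hn
    rw [Pi.smul_apply, indicator_of_notMem fun h => hn (level_eq_of_mem_levelSet h).symm, smul_zero]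

/-- The coefficients of `f` reweighted by `2^{n(α-1)}` on level `n`. The reweighting turns the
square function into its `α`-th power, up to a constant. -/
def levelWeighted (s : Finset DyadicI) (x : DyadicI → X) (α : ℝ) (I : DyadicI) : X :=
  ((2 : ℝ) ^ level s x I) ^ (α - 1) • x I

lemma sqFn_levelWeighted_le {α : ℝ} (hα : 0 < α) (s : Finset DyadicI) (x : DyadicI → X) (t : ℝ) :
    sqFn s (levelWeighted s x α) t ≤ 2 * dyadicGeomSum α * sqFn s x t ^ α := by
  let weight (n : ℤ) : ℝ := ((2 : ℝ) ^ n) ^ (α - 1)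
  have hweight (n : ℤ) : 0 ≤ weight n := by positivity
  have hcancel (n : ℤ) : weight n * (2 * 2 ^ n) = 2 * ((2 : ℝ) ^ n) ^ α := by
    have hpos : (0 : ℝ) < 2 ^ n := by positivity
    simp only [weight, Real.rpow_sub_one hpos.ne']
    field_simp
  calc sqFn s (levelWeighted s x α) t
      = sqFn s (∑ n ∈ s.image (level s x),
          weight n • (levelSet s x n : Set DyadicI).indicator x) t :=
        sqFn_congr fun I hI _ => (sum_smul_indicator_levelSet weight x hI).symm
    _ ≤ ∑ n ∈ s.image (level s x),
          weight n * sqFn s ((levelSet s x n : Set DyadicI).indicator x) t := by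
        refine (sqFn_sum_le _ _ _ _).trans_eq (Finset.sum_congr rfl fun n _ => ?_)
        rw [sqFn_smul, abs_of_nonneg (hweight n)]
    _ ≤ ∑ n ∈ s.image (level s x),
          weight n * if (2 : ℝ) ^ n ≤ sqFn s x t then 2 * 2 ^ n else 0 := by
        gcongr with n
        exact sqFn_indicator_levelSet_le s x n t
    _ = 2 * ∑ n ∈ s.image (level s x) with (2 : ℝ) ^ n ≤ sqFn s x t, ((2 : ℝ) ^ n) ^ α := by
        simp only [mul_ite, mul_zero, hcancel, Finset.mul_sum, Finset.sum_filter]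
    _ ≤ 2 * dyadicGeomSum α * sqFn s x t ^ α := by
        rw [mul_assoc]
        gcongr
        exact sum_two_zpow_rpow_le hα (sqFn_nonneg s x t) _

lemma hpNormV_levelWeighted_le {q p : ℝ} (hq : 0 < q) (hp : 0 < p) (hx : HpNormV q s x ≤ 1) :
    HpNormV p s (levelWeighted s x (q / p)) ≤ 2 * dyadicGeomSum (q / p) := by
  have hK : 0 ≤ 2 * dyadicGeomSum (q / p) :=
    mul_nonneg zero_le_two (dyadicGeomSum_pos (div_pos hq hp)).le
  rw [hpNormV_le_iff hq zero_le_one, ENNReal.ofReal_one, ENNReal.one_rpow] at hx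
  rw [hpNormV_le_iff hp hK]
  calc ∫⁻ t in Icc 0 1, ENNReal.ofReal (sqFn s (levelWeighted s x (q / p)) t) ^ p
      ≤ ∫⁻ t in Icc 0 1, ENNReal.ofReal (2 * dyadicGeomSum (q / p)) ^ p *
          ENNReal.ofReal (sqFn s x t) ^ q := by
        refine lintegral_mono fun t => ?_
        have hsq := ENNReal.ofReal_le_ofReal (sqFn_levelWeighted_le (div_pos hq hp) s x t)
        rw [ENNReal.ofReal_mul hK, ← ENNReal.ofReal_rpow_of_nonneg (sqFn_nonneg s x t)
          (by positivity)] at hsq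
        refine (ENNReal.rpow_le_rpow hsq hp.le).trans_eq ?_
        rw [ENNReal.mul_rpow_of_nonneg _ _ hp.le, ← ENNReal.rpow_mul, div_mul_cancel₀ _ hp.ne']
    _ = ENNReal.ofReal (2 * dyadicGeomSum (q / p)) ^ p *
          ∫⁻ t in Icc 0 1, ENNReal.ofReal (sqFn s x t) ^ q :=
        lintegral_const_mul _ ((measurable_sqFn s x).ennreal_ofReal.pow_const q)
    _ ≤ ENNReal.ofReal (2 * dyadicGeomSum (q / p)) ^ p := mul_le_of_le_one_right' hx

/-- The maximal function `∑_n 2^{nq} μ_{τ(D_n)}`, where `D_n` are the intervals at level `n`. -/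
def levelMaximal (τ : DyadicI → DyadicI) (q : ℝ) (s : Finset DyadicI) (x : DyadicI → X)
    (t : ℝ) : ℝ≥0∞ :=
  ∑ n ∈ s.image (level s x), ENNReal.ofReal (((2 : ℝ) ^ n) ^ q) * muSet τ (levelSet s x n) t

lemma measurable_levelMaximal (τ : DyadicI → DyadicI) (q : ℝ) (s : Finset DyadicI)
    (x : DyadicI → X) : Measurable (levelMaximal τ q s x) :=
  Finset.measurable_sum _ fun _ _ => (measurable_muSet τ _).const_mul _

lemma levelMaximal_ne_top (τ : DyadicI → DyadicI) (q : ℝ) (s : Finset DyadicI) (x : DyadicI → X)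
    (t : ℝ) : levelMaximal τ q s x t ≠ ∞ :=
  ENNReal.sum_ne_top.2 fun _ _ =>
    ENNReal.mul_ne_top ENNReal.ofReal_ne_top (muSet_lt_top τ _ t).ne

lemma le_toReal_levelMaximal (τ : DyadicI → DyadicI) (q : ℝ) (hI : I ∈ s) (hx : x I ≠ 0)
    (ht : t ∈ toSet (τ I)) :
    ((2 : ℝ) ^ level s x I) ^ q * (len I / len (τ I)) ≤ (levelMaximal τ q s x t).toReal := by
  rw [← ENNReal.ofReal_le_iff_le_toReal (levelMaximal_ne_top τ q s x t),
    ENNReal.ofReal_mul (by positivity)]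
  refine le_trans ?_ (Finset.single_le_sum (fun _ _ => zero_le) (Finset.mem_image_of_mem _ hI))
  gcongr
  exact ofReal_len_div_len_le_muSet (mem_levelSet_level hI hx) ht

lemma sum_ofReal_mul_indicator_pointSet_le {q : ℝ} (hq : 0 < q) (s : Finset DyadicI)
    (x : DyadicI → X) (t : ℝ) :
    ∑ n ∈ s.image (level s x), ENNReal.ofReal (((2 : ℝ) ^ n) ^ q) *
        (pointSet (levelSet s x n)).indicator 1 t ≤
      ENNReal.ofReal (dyadicGeomSum q) * ENNReal.ofReal (sqFn s x t) ^ q := by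
  rw [ENNReal.ofReal_rpow_of_nonneg (sqFn_nonneg s x t) hq.le,
    ← ENNReal.ofReal_mul (dyadicGeomSum_pos hq).le]
  refine le_trans ?_ (ENNReal.ofReal_le_ofReal
    (sum_two_zpow_rpow_le hq (sqFn_nonneg s x t) (s.image (level s x))))
  rw [ENNReal.ofReal_sum_of_nonneg fun _ _ => by positivity, Finset.sum_filter]
  refine Finset.sum_le_sum fun n _ => ?_
  by_cases ht : t ∈ pointSet (levelSet s x n)
  · obtain ⟨I, hI, htI⟩ := mem_iUnion₂.1 ht
    rw [if_pos (two_zpow_le_sqFn hI htI), indicator_of_mem ht, Pi.one_apply, mul_one]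
  · simp [ht]

lemma lintegral_levelMaximal_le {q : ℝ} (hq : 0 < q) (τ : DyadicI → DyadicI) (s : Finset DyadicI)
    (x : DyadicI → X) :
    ∫⁻ t in Icc 0 1, levelMaximal τ q s x t ≤
      Cone τ * (ENNReal.ofReal (dyadicGeomSum q) *
        ∫⁻ t in Icc 0 1, ENNReal.ofReal (sqFn s x t) ^ q) := by
  have hmeas (n : ℤ) :
      Measurable ((pointSet (levelSet s x n : Set DyadicI)).indicator (1 : ℝ → ℝ≥0∞)) :=
    measurable_one.indicator (measurableSet_pointSet _)
  have hvolume (n : ℤ) : ∫⁻ t in Icc 0 1, (pointSet (levelSet s x n)).indicator 1 t =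
      volume (pointSet (levelSet s x n : Set DyadicI)) := by
    rw [lintegral_indicator_one (measurableSet_pointSet _),
      Measure.restrict_apply (measurableSet_pointSet _),
      inter_eq_left.2 (pointSet_subset_Icc _)]
  calc ∫⁻ t in Icc 0 1, levelMaximal τ q s x t
      = ∑ n ∈ s.image (level s x), ENNReal.ofReal (((2 : ℝ) ^ n) ^ q) *
          ∫⁻ t in Icc 0 1, muSet τ (levelSet s x n) t := by
        simp only [levelMaximal]
        rw [lintegral_finsetSum _ fun _ _ => (measurable_muSet τ _).const_mul _]
        simp only [lintegral_const_mul _ (measurable_muSet τ _)]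
    _ ≤ ∑ n ∈ s.image (level s x), ENNReal.ofReal (((2 : ℝ) ^ n) ^ q) *
          (Cone τ * volume (pointSet (levelSet s x n : Set DyadicI))) := by
        gcongr
        exact lintegral_muSet_le τ _
    _ = Cone τ * ∫⁻ t in Icc 0 1, ∑ n ∈ s.image (level s x),
          ENNReal.ofReal (((2 : ℝ) ^ n) ^ q) * (pointSet (levelSet s x n)).indicator 1 t := by
        rw [lintegral_finsetSum _ fun n _ => (hmeas n).const_mul _, Finset.mul_sum]
        simp only [lintegral_const_mul _ (hmeas _), hvolume, mul_left_comm]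
    _ ≤ Cone τ * (ENNReal.ofReal (dyadicGeomSum q) *
          ∫⁻ t in Icc 0 1, ENNReal.ofReal (sqFn s x t) ^ q) := by
        rw [← lintegral_const_mul _ ((measurable_sqFn s x).ennreal_ofReal.pow_const q)]
        gcongr with t
        exact sum_ofReal_mul_indicator_pointSet_le hq s x t

end Levels

section Extrapolation

variable {X : Type*} [NormedAddCommGroup X] [NormedSpace ℝ X] {τ : DyadicI → DyadicI} {q p : ℝ}

lemma rpow_one_div_eq_mul {w c : ℝ} (hw : 0 < w) (hc : 0 < c) (hq : q ≠ 0) :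
    c ^ (1 / q) = (w ^ q * c) ^ (1 / q - 1 / p) * (c ^ (1 / p) * w ^ (q / p - 1)) := by
  have hexponent : q * (1 / q - 1 / p) = -(q / p - 1) := by field_simp; ring
  calc c ^ (1 / q)
      = (w ^ (-(q / p - 1)) * w ^ (q / p - 1)) * (c ^ (1 / q - 1 / p) * c ^ (1 / p)) := by
        rw [← Real.rpow_add hw, ← Real.rpow_add hc, neg_add_cancel, sub_add_cancel,
          Real.rpow_zero, one_mul]
    _ = (w ^ q * c) ^ (1 / q - 1 / p) * (c ^ (1 / p) * w ^ (q / p - 1)) := by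
        rw [Real.mul_rpow (by positivity) hc.le, ← Real.rpow_mul hw.le, hexponent]
        ring

lemma ofReal_sqFn_rearrCoef_le (hτ : Function.Injective τ) (hq : 0 < q) (hqp : q ≤ p)
    (s : Finset DyadicI) (x : DyadicI → X) (t : ℝ) :
    ENNReal.ofReal (sqFn (s.image τ) (rearrCoef τ q s x) t) ≤
      levelMaximal τ q s x t ^ (1 / q - 1 / p) *
        ENNReal.ofReal (sqFn (s.image τ) (rearrCoef τ p s (levelWeighted s x (q / p))) t) := by
  have he : 0 ≤ 1 / q - 1 / p := sub_nonneg.2 (one_div_le_one_div_of_le hq hqp)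
  have hM : 0 ≤ (levelMaximal τ q s x t).toReal ^ (1 / q - 1 / p) := by positivity
  rw [← ENNReal.ofReal_toReal (levelMaximal_ne_top τ q s x t),
    ENNReal.ofReal_rpow_of_nonneg ENNReal.toReal_nonneg he, ← ENNReal.ofReal_mul hM]
  refine ENNReal.ofReal_le_ofReal (sqFn_le_mul_sqFn hM fun J hJ ht => ?_)
  obtain ⟨I, hI, rfl⟩ := Finset.mem_image.1 hJ
  rw [rearrCoef_apply hτ q x hI, rearrCoef_apply hτ p _ hI, levelWeighted]
  by_cases hx : x I = 0
  · exact ⟨0, by rwa [abs_zero], by simp [hx]⟩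
  have hratio : 0 < len I / len (τ I) := div_pos I.len_pos (τ I).len_pos
  have hlevel : (0 : ℝ) < 2 ^ level s x I := by positivity
  refine ⟨(((2 : ℝ) ^ level s x I) ^ q * (len I / len (τ I))) ^ (1 / q - 1 / p), ?_, ?_⟩
  · rw [abs_of_nonneg (by positivity)]
    gcongr
    exact le_toReal_levelMaximal τ q hI hx ht
  · rw [smul_smul, smul_smul, rpow_one_div_eq_mul (p := p) hlevel hratio hq.ne', mul_assoc]

theorem hpOpNorm_le_dyadicGeomSum_mul (hτ : Function.Injective τ) (hq : 0 < q) (hqp : q ≤ p) :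
    hpOpNorm τ q X ≤
      ENNReal.ofReal (dyadicGeomSum q ^ (1 / q - 1 / p) * (2 * dyadicGeomSum (q / p))) *
        Cone τ ^ (1 / q - 1 / p) * hpOpNorm τ p X := by
  have hp : 0 < p := hq.trans_le hqp
  have he : 0 ≤ 1 / q - 1 / p := sub_nonneg.2 (one_div_le_one_div_of_le hq hqp)
  have hG := dyadicGeomSum_pos hq
  have hK : 0 < 2 * dyadicGeomSum (q / p) := mul_pos two_pos (dyadicGeomSum_pos (div_pos hq hp))
  refine iSup_le fun s => iSup₂_le fun x hx => ?_
  set S := sqFn (s.image τ) (rearrCoef τ p s (levelWeighted s x (q / p))) with hS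
  have hmaximal : ∫⁻ t in Icc 0 1, levelMaximal τ q s x t ≤
      Cone τ * ENNReal.ofReal (dyadicGeomSum q) := by
    rw [hpNormV_le_iff hq zero_le_one, ENNReal.ofReal_one, ENNReal.one_rpow] at hx
    refine (lintegral_levelMaximal_le hq τ s x).trans ?_
    gcongr
    exact mul_le_of_le_one_right' hx
  calc ENNReal.ofReal (HpNormV q (s.image τ) (rearrCoef τ q s x))
      ≤ (∫⁻ t in Icc 0 1, (levelMaximal τ q s x t ^ (1 / q - 1 / p) *
          ENNReal.ofReal (S t)) ^ q) ^ (1 / q) := by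
        rw [ofReal_hpNormV hq.le]
        gcongr with t
        exact ofReal_sqFn_rearrCoef_le hτ hq hqp s x t
    _ ≤ (∫⁻ t in Icc 0 1, levelMaximal τ q s x t) ^ (1 / q - 1 / p) *
          (∫⁻ t in Icc 0 1, ENNReal.ofReal (S t) ^ p) ^ (1 / p) :=
        lintegral_rpow_mul_rpow_le (measurable_levelMaximal τ q s x).aemeasurable
          (measurable_sqFn _ _).ennreal_ofReal.aemeasurable hq hqp
    _ ≤ (Cone τ * ENNReal.ofReal (dyadicGeomSum q)) ^ (1 / q - 1 / p) *
          (ENNReal.ofReal (2 * dyadicGeomSum (q / p)) * hpOpNorm τ p X) := by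
        rw [hS, ← ofReal_hpNormV hp.le]
        gcongr
        exact ofReal_hpNormV_rearrCoef_le hp hK (hpNormV_levelWeighted_le hq hp hx)
    _ = ENNReal.ofReal (dyadicGeomSum q ^ (1 / q - 1 / p) * (2 * dyadicGeomSum (q / p))) *
          Cone τ ^ (1 / q - 1 / p) * hpOpNorm τ p X := by
        rw [ENNReal.mul_rpow_of_nonneg _ _ he,
          ENNReal.ofReal_mul (p := dyadicGeomSum q ^ (1 / q - 1 / p)) (by positivity),
          ENNReal.ofReal_rpow_of_nonneg hG.le he]
        ring

theorem statement1_general (q r : ℝ) (hq : 0 < q) (hr : 0 < r) :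
    ∃ A : ℝ, 0 < A ∧
      ∀ (p : ℝ), q ≤ p → p ≤ r →
        ∀ (X : Type*) [NormedAddCommGroup X] [NormedSpace ℝ X] (τ : DyadicI → DyadicI),
          Function.Injective τ →
            hpOpNorm τ q X ≤
              ENNReal.ofReal A * Cone τ ^ (1 / q - 1 / p) * hpOpNorm τ p X := by
  have hone : 1 ≤ dyadicGeomSum q := one_le_dyadicGeomSum hq
  have hqr : 0 < dyadicGeomSum (q / r) := dyadicGeomSum_pos (div_pos hq hr)
  refine ⟨dyadicGeomSum q ^ (1 / q) * (2 * dyadicGeomSum (q / r)), by positivity, ?_⟩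
  intro p hqp hpr X _ _ τ hτ
  have hp : 0 < p := hq.trans_le hqp
  have hqp' : 0 < dyadicGeomSum (q / p) := dyadicGeomSum_pos (div_pos hq hp)
  refine (hpOpNorm_le_dyadicGeomSum_mul hτ hq hqp).trans ?_
  gcongr
  · exact sub_le_self _ (by positivity)
  · exact dyadicGeomSum_le_dyadicGeomSum (div_pos hq hr) (by gcongr)

end Extrapolation

/-- Let `0 < q ≤ p ≤ 2`. There is a constant `A_q > 0`, depending
only on `q`, such that for every Banach space `X` and every injective `τ : D → D`,
`‖T_{τ,q} ⊗ Id_X‖_q ≤ A_q · C₁^{1/q - 1/p} · ‖T_{τ,p} ⊗ Id_X‖_p` in `[0,∞]`. -/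
theorem statement1 (q : ℝ) (hq : 0 < q) :
    ∃ A : ℝ, 0 < A ∧
      ∀ (p : ℝ), q ≤ p → p ≤ 2 →
        ∀ (X : Type*) [NormedAddCommGroup X] [NormedSpace ℝ X] [CompleteSpace X]
          (τ : DyadicI → DyadicI), Function.Injective τ →
            hpOpNorm τ q X ≤
              ENNReal.ofReal A * Cone τ ^ (1 / q - 1 / p) * hpOpNorm τ p X := by
  obtain ⟨A, hA, hbound⟩ := statement1_general q 2 hq two_pos
  exact ⟨A, hA, fun p hqp hp2 X _ _ _ τ hτ => hbound p hqp hp2 X τ hτ⟩
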